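/- Let K be a real n×n matrix that is symmetric positive semidefinite, entrywise nonnegative, irreducible, and has K_{ii} > 0 for all 1 ≤ i ≤ n; let D = diag(K𝟙) and W = D^{−1}K. Let A be a nonzero real m×n matrix with A𝟙 ≠ 0, and b ∈ ℝ^m. Fix γ with 0 < γ < 1/λ_max(D^{−1/2}AᵀA D^{−1/2}) and a real sequence {α_k}_{k≥1} with α_k → 1. Then there exists a unique x* ∈ ℝ^n such that for every initialization x₀ ∈ ℝ^n, the scaled-PnP-FISTA iterates defined by y₁ = x₀ and, for k ≥ 1, x_k = W(y_k − γ D^{−1}Aᵀ(A y_k − b)) and y_{k+1} = x_k + α_k(x_k − x_{k−1}), converge linearly to x*: there exist C > 0, β ∈ [0,1), and K' ≥ 1 such that ‖x_k − x*‖₂ ≤ C·β^k for all k ≥ K'. Moreover, every complex eigenvalue of P_γ := W(I_n − γ D^{−1}AᵀA) is real and lies in [0,1). -/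

import Mathlib

open Filter Matrix

/-- The Euclidean (ℓ²) norm on `Fin n → ℝ`. -/
noncomputable def norm2 {n : ℕ} (x : Fin n → ℝ) : ℝ := Real.sqrt (∑ i, x i ^ 2)

/-- The largest eigenvalue of a real (symmetric) matrix, as the supremum of its real
spectrum. -/
noncomputable def lamMax {n : ℕ} (S : Matrix (Fin n) (Fin n) ℝ) : ℝ := sSup (spectrum ℝ S)

lemma scalar_conv (l β : ℝ) (hl0 : 0 ≤ l) (hl1 : l < 1) (hβ0 : 0 < β) (hlβ : l < β ^ 2)
    (α : ℕ → ℝ) (hα : Tendsto α atTop (nhds 1)) (c : ℕ → ℝ)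
    (hc : ∀ k, 1 ≤ k → c (k + 1) = l * (c k + α k * (c k - c (k - 1)))) :
    ∃ C, ∃ N : ℕ, ∀ k, N ≤ k → |c k| ≤ C * β ^ k := by
  have h1 : Tendsto (fun k => l * α k ^ 2) atTop (nhds l) := by
    simpa using (hα.pow 2).const_mul l
  obtain ⟨N, hN⟩ := eventually_atTop.1 (h1.eventually (gt_mem_nhds hlβ))
  let V : ℕ → ℝ := fun k => (1 - l) * c (k+1) ^ 2 + l * (c (k+1) - c k) ^ 2
  have hVs : ∀ k, N ≤ k → V (k+1) ≤ β ^ 2 * V k := by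
    intro k hk
    have h2 := hN (k+1) (by omega)
    have h3 := hc (k+1) (by omega)
    simp only [Nat.add_sub_cancel] at h3
    have h4 : β ^ 2 * V k - V (k+1) = (β^2 - l) * ((1 - l) * c (k+1) ^ 2)
        + l * (c (k+1) - c k) ^ 2 * (β ^ 2 - l * α (k+1) ^ 2) := by
      simp only [V]; rw [h3]; ring
    have h5 : 0 ≤ (β^2 - l) * ((1 - l) * c (k+1) ^ 2) := by
      apply mul_nonneg (by linarith) (mul_nonneg (by linarith) (sq_nonneg _))
    have h6 : 0 ≤ l * (c (k+1) - c k) ^ 2 * (β ^ 2 - l * α (k+1) ^ 2) :=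
      mul_nonneg (mul_nonneg hl0 (sq_nonneg _)) (by linarith)
    linarith
  have hVj : ∀ j, V (N + j) ≤ (β ^ 2) ^ j * V N := by
    intro j
    induction j with
    | zero => simp
    | succ j ih =>
      have h7 := hVs (N + j) (by omega)
      calc V (N + (j+1)) ≤ β ^ 2 * V (N + j) := h7
        _ ≤ β ^ 2 * ((β ^ 2) ^ j * V N) := by gcongr
        _ = _ := by ring
  have hV0 : 0 ≤ V N := add_nonneg (mul_nonneg (by linarith) (sq_nonneg _))
    (mul_nonneg hl0 (sq_nonneg _))
  refine ⟨Real.sqrt (V N / (1 - l)) / β ^ (N + 1), N + 1, ?_⟩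
  intro k hk
  obtain ⟨j, rfl⟩ := Nat.exists_eq_add_of_le hk
  have h8 : (1 - l) * c (N + 1 + j) ^ 2 ≤ (β ^ 2) ^ j * V N := by
    refine le_trans ?_ (hVj j)
    have e : N + 1 + j = N + j + 1 := by omega
    rw [e]
    have := mul_nonneg hl0 (sq_nonneg (c (N+j+1) - c (N+j)))
    simp only [V]; linarith
  have e2 : Real.sqrt (V N / (1 - l)) / β ^ (N + 1) * β ^ (N + 1 + j)
      = Real.sqrt (V N / (1 - l)) * β ^ j := by
    rw [pow_add β (N+1) j]; field_simp
  rw [e2]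
  refine abs_le_of_sq_le_sq ?_ (by positivity)
  rw [mul_pow, Real.sq_sqrt (div_nonneg hV0 (by linarith)), div_mul_eq_mul_div,
    le_div_iff₀ (by linarith)]
  calc _ = (1 - l) * c (N + 1 + j) ^ 2 := by ring
    _ ≤ _ := h8
    _ = _ := by ring

open scoped MatrixOrder in
lemma diag_lemma {n : ℕ} (B H : Matrix (Fin n) (Fin n) ℝ) (hB : B.PosSemidef) (hH : H.PosDef) :
    ∃ (T Ti : Matrix (Fin n) (Fin n) ℝ) (l : Fin n → ℝ), T * Ti = 1 ∧ Ti * T = 1 ∧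
      (∀ i, 0 ≤ l i) ∧ B * H = T * diagonal l * Ti := by
  obtain ⟨R, hR⟩ := (CStarAlgebra.nonneg_iff_eq_star_mul_self (a := H)).1 hH.posSemidef.nonneg
  have hdet : IsUnit R.det := by
    have := hH.det_pos
    rw [hR, det_mul] at this
    exact isUnit_iff_ne_zero.2 (right_ne_zero_of_mul this.ne')
  have hQ := hB.mul_mul_conjTranspose_same R
  have hU1 : (hQ.1.eigenvectorUnitary : Matrix (Fin n) (Fin n) ℝ) * star (hQ.1.eigenvectorUnitary : Matrix (Fin n) (Fin n) ℝ) = 1 :=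
    Unitary.coe_mul_star_self _
  have hU2 : star (hQ.1.eigenvectorUnitary : Matrix (Fin n) (Fin n) ℝ) * (hQ.1.eigenvectorUnitary : Matrix (Fin n) (Fin n) ℝ) = 1 :=
    Unitary.coe_star_mul_self _
  have hs := hQ.1.spectral_theorem
  rw [Unitary.conjStarAlgAut_apply] at hs
  set U : Matrix (Fin n) (Fin n) ℝ := (hQ.1.eigenvectorUnitary : Matrix (Fin n) (Fin n) ℝ)
  refine ⟨R⁻¹ * U, star U * R, hQ.1.eigenvalues, ?_, ?_, hQ.eigenvalues_nonneg, ?_⟩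
  · calc R⁻¹ * U * (star U * R) = R⁻¹ * (U * star U) * R := by simp only [mul_assoc]
      _ = 1 := by rw [hU1, mul_one, nonsing_inv_mul _ hdet]
  · calc star U * R * (R⁻¹ * U) = star U * (R * R⁻¹) * U := by simp only [mul_assoc]
      _ = 1 := by rw [mul_nonsing_inv _ hdet, mul_one, hU2]
  · calc B * H = (R⁻¹ * R) * (B * (star R * R)) := by rw [nonsing_inv_mul _ hdet, one_mul, ← hR]
      _ = R⁻¹ * (R * B * Rᴴ) * R := by simp only [mul_assoc]; rfl
      _ = R⁻¹ * (U * diagonal hQ.1.eigenvalues * star U) * R := by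
          conv_lhs => rw [hs]
          rfl
      _ = _ := by simp only [mul_assoc]

lemma lap {n : ℕ} (K : Matrix (Fin n) (Fin n) ℝ) (hs : ∀ i j, K i j = K j i) (w : Fin n → ℝ) :
    ∑ i, (K *ᵥ fun _ => (1 : ℝ)) i * w i ^ 2 - ∑ i, w i * (K *ᵥ w) i
      = (1/2) * ∑ i, ∑ j, K i j * (w i - w j) ^ 2 := by
  have e1 : ∑ i, (K *ᵥ fun _ => (1 : ℝ)) i * w i ^ 2 = ∑ i, ∑ j, K i j * w i ^ 2 := by
    simp [mulVec, dotProduct, Finset.sum_mul]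
  have e2 : ∑ i, w i * (K *ᵥ w) i = ∑ i, ∑ j, K i j * (w i * w j) := by
    simp only [mulVec, dotProduct, Finset.mul_sum]
    refine Finset.sum_congr rfl fun i _ => Finset.sum_congr rfl fun j _ => by ring
  have e3 : ∑ i, ∑ j, K i j * w i ^ 2 = ∑ i, ∑ j, K i j * w j ^ 2 := by
    rw [Finset.sum_comm]
    refine Finset.sum_congr rfl fun i _ => Finset.sum_congr rfl fun j _ => by rw [hs]
  have e4 : ∑ i, ∑ j, K i j * (w i - w j) ^ 2 = ∑ i, ∑ j, K i j * w i ^ 2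
      + ∑ i, ∑ j, K i j * w j ^ 2 - 2 * ∑ i, ∑ j, K i j * (w i * w j) := by
    simp only [Finset.mul_sum, ← Finset.sum_add_distrib, ← Finset.sum_sub_distrib]
    refine Finset.sum_congr rfl fun i _ => Finset.sum_congr rfl fun j _ => by ring
  rw [e1, e2, e4, ← e3]; ring

lemma lap_const {n : ℕ} (K : Matrix (Fin n) (Fin n) ℝ) (hnonneg : ∀ i j, 0 ≤ K i j)
    (hirr : ∀ i j, ∃ k : ℕ, 0 < k ∧ 0 < (K ^ k) i j) (w : Fin n → ℝ)
    (h : ∑ i, ∑ j, K i j * (w i - w j) ^ 2 ≤ 0) : ∀ i j, w i = w j := by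
  have hz : ∀ i j, K i j * (w i - w j) ^ 2 = 0 := by
    intro i j
    have nn : ∀ i j, 0 ≤ K i j * (w i - w j) ^ 2 := fun i j => mul_nonneg (hnonneg i j) (sq_nonneg _)
    have h0 := le_antisymm h (Finset.sum_nonneg fun i _ => Finset.sum_nonneg fun j _ => nn i j)
    have h1 := (Finset.sum_eq_zero_iff_of_nonneg
      (fun i _ => Finset.sum_nonneg fun j _ => nn i j)).1 h0 i (Finset.mem_univ _)
    exact (Finset.sum_eq_zero_iff_of_nonneg (fun j _ => nn i j)).1 h1 j (Finset.mem_univ _)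
  have hcomm : Commute (diagonal w) K := by
    ext i j
    rw [diagonal_mul, mul_diagonal]
    rcases mul_eq_zero.1 (hz i j) with h | h
    · simp [h]
    · have : w i = w j := by have := pow_eq_zero_iff (two_ne_zero) |>.1 h; linarith
      rw [this]; ring
  intro i j
  obtain ⟨k, _, hk⟩ := hirr i j
  have := congrFun (congrFun (hcomm.pow_right k).eq i) j
  rw [diagonal_mul, mul_diagonal, mul_comm] at this
  exact mul_left_cancel₀ hk.ne' this

lemma eig_lt {n m : ℕ} (K : Matrix (Fin n) (Fin n) ℝ) (hs : ∀ i j, K i j = K j i)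
    (hnonneg : ∀ i j, 0 ≤ K i j)
    (hirr : ∀ i j, ∃ k : ℕ, 0 < k ∧ 0 < (K ^ k) i j)
    (d : Fin n → ℝ) (hd : d = K *ᵥ fun _ => (1 : ℝ)) (hd0 : ∀ i, 0 < d i)
    (A : Matrix (Fin m) (Fin n) ℝ) (hA1 : A *ᵥ (fun _ => (1 : ℝ)) ≠ 0)
    (γ : ℝ) (hγ0 : 0 < γ)
    (hH : ∀ u : Fin n → ℝ, u ≠ 0 → γ * ((A *ᵥ u) ⬝ᵥ (A *ᵥ u)) < ∑ i, d i * u i ^ 2)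
    (v : Fin n → ℝ) (hv : v ≠ 0) (l : ℝ)
    (hl : ∀ i, (K *ᵥ fun j => v j - γ * ((Aᵀ *ᵥ (A *ᵥ v)) j / d j)) i = d i * (l * v i)) :
    l < 1 := by
  by_contra hcon
  push Not at hcon
  have hadj : ∀ u, u ⬝ᵥ (Aᵀ *ᵥ (A *ᵥ v)) = (A *ᵥ u) ⬝ᵥ (A *ᵥ v) := by
    intro u
    rw [dotProduct_mulVec, vecMul_transpose]
  set g := Aᵀ *ᵥ (A *ᵥ v) with hg
  set z : Fin n → ℝ := fun j => g j / d j with hz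
  set w : Fin n → ℝ := fun j => v j - γ * (g j / d j) with hw
  have hgz : ∀ i, g i = d i * z i := fun i => by
    simp only [hz]; field_simp [(hd0 i).ne']
  have hwz : ∀ i, w i = v i - γ * z i := fun i => rfl
  have hvg : ∑ i, d i * (v i * z i) = (A *ᵥ v) ⬝ᵥ (A *ᵥ v) := by
    rw [← hadj]; refine Finset.sum_congr rfl fun i _ => by rw [hgz]; ring
  have hzg : ∑ i, d i * z i ^ 2 = (A *ᵥ z) ⬝ᵥ (A *ᵥ v) := by
    rw [← hadj]; refine Finset.sum_congr rfl fun i _ => by rw [hgz]; ring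
  have hS : ∑ i, d i * (v i * w i) = ∑ i, d i * v i ^ 2 - γ * ∑ i, d i * (v i * z i) := by
    rw [Finset.mul_sum, ← Finset.sum_sub_distrib]
    refine Finset.sum_congr rfl fun i _ => by rw [hwz]; ring
  have hWW : ∑ i, d i * w i ^ 2 = ∑ i, d i * v i ^ 2 - 2 * γ * ∑ i, d i * (v i * z i)
      + γ ^ 2 * ∑ i, d i * z i ^ 2 := by
    rw [Finset.mul_sum, Finset.mul_sum, ← Finset.sum_sub_distrib, ← Finset.sum_add_distrib]
    refine Finset.sum_congr rfl fun i _ => by rw [hwz]; ring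
  have hHv := hH v hv
  have hHz : γ * ((A *ᵥ z) ⬝ᵥ (A *ᵥ z)) ≤ ∑ i, d i * z i ^ 2 := by
    by_cases h0 : z = 0
    · simp [h0]
    · exact (hH z h0).le
  have hsq : 0 ≤ (A *ᵥ v - γ • (A *ᵥ z)) ⬝ᵥ (A *ᵥ v - γ • (A *ᵥ z)) :=
    Finset.sum_nonneg fun i _ => mul_self_nonneg _
  have hsq2 : (A *ᵥ v - γ • (A *ᵥ z)) ⬝ᵥ (A *ᵥ v - γ • (A *ᵥ z))
      = (A *ᵥ v) ⬝ᵥ (A *ᵥ v) - 2 * γ * ((A *ᵥ z) ⬝ᵥ (A *ᵥ v)) + γ * (γ * ((A *ᵥ z) ⬝ᵥ (A *ᵥ z))) := by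
    simp only [sub_dotProduct, dotProduct_sub, smul_dotProduct, dotProduct_smul, smul_eq_mul]
    rw [dotProduct_comm (A *ᵥ v) (A *ᵥ z)]; ring
  rw [hsq2, ← hzg] at hsq
  have hKw : ∑ i, w i * (K *ᵥ w) i = l * ∑ i, d i * (v i * w i) := by
    rw [Finset.mul_sum]
    refine Finset.sum_congr rfl fun i _ => by rw [hl]; ring
  have hlap := lap K hs w
  rw [← hd, hKw] at hlap
  rw [hvg] at hS hWW
  set q := ∑ i, d i * z i ^ 2
  set a := (A *ᵥ v) ⬝ᵥ (A *ᵥ v)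
  have hSpos : 0 < ∑ i, d i * (v i * w i) := by linarith
  have hga : γ * q ≤ a := by nlinarith
  have hWS : ∑ i, d i * w i ^ 2 ≤ ∑ i, d i * (v i * w i) := by nlinarith
  have hconst := lap_const K hnonneg hirr w (by nlinarith)
  have hLn : 0 ≤ ∑ i, ∑ j, K i j * (w i - w j) ^ 2 :=
    Finset.sum_nonneg fun i _ => Finset.sum_nonneg fun j _ => mul_nonneg (hnonneg i j) (sq_nonneg _)
  have hl1 : l = 1 := by
    refine le_antisymm ?_ hcon
    by_contra h
    push Not at h
    nlinarith
  have hvw : ∀ i, v i = w i := by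
    intro i
    have h1 := hl i
    have h2 : (K *ᵥ w) i = d i * w i := by
      rw [hd]
      simp only [mulVec, dotProduct, mul_one, Finset.sum_mul]
      exact Finset.sum_congr rfl fun j _ => by rw [hconst i j]
    rw [h2, hl1, one_mul] at h1
    exact (mul_left_cancel₀ (hd0 i).ne' h1).symm
  have hz0 : ∀ i, z i = 0 := by
    intro i
    have h1 := hvw i
    rw [hwz] at h1
    have : γ * z i = 0 := by linarith
    exact (mul_eq_zero.1 this).resolve_left hγ0.ne'
  have ha : a = 0 := by rw [← hvg]; simp [hz0]
  have hAv : A *ᵥ v = 0 := dotProduct_self_eq_zero.1 ha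
  obtain ⟨i, hi⟩ : ∃ i, v i ≠ 0 := by
    by_contra h; push Not at h; exact hv (funext h)
  have hvc : v = v i • (fun _ => (1:ℝ)) := by
    ext j; simp [hvw, hconst i j]
  rw [hvc, mulVec_smul] at hAv
  exact hA1 ((smul_eq_zero.1 hAv).resolve_left hi)

lemma lam_bound {n : ℕ} (S : Matrix (Fin n) (Fin n) ℝ) (hS : S.IsHermitian) (u : Fin n → ℝ) :
    u ⬝ᵥ (S *ᵥ u) ≤ lamMax S * (u ⬝ᵥ u) := by
  have hp : (lamMax S • (1 : Matrix (Fin n) (Fin n) ℝ) - S).PosSemidef := by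
    rw [posSemidef_iff_isHermitian_and_spectrum_nonneg]
    refine ⟨(by
      have : (lamMax S • (1 : Matrix (Fin n) (Fin n) ℝ)).IsHermitian := by
        simp [IsHermitian]
      exact this.sub hS), ?_⟩
    intro t ht
    rw [← Algebra.algebraMap_eq_smul_one, ← spectrum.singleton_sub_eq] at ht
    obtain ⟨a, ha, s, hs, rfl⟩ := Set.mem_sub.1 ht
    have h1 : s ≤ lamMax S := le_csSup (finite_real_spectrum).bddAbove hs
    rw [Set.mem_singleton_iff] at ha
    show (0:ℝ) ≤ a - s
    linarith
  have := hp.dotProduct_mulVec_nonneg u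
  simp only [star_trivial, sub_mulVec, smul_mulVec, one_mulVec, dotProduct_sub, dotProduct_smul,
    smul_eq_mul] at this
  linarith

lemma core (n m : ℕ) (K : Matrix (Fin n) (Fin n) ℝ)
    (hK : K.PosSemidef) (hnonneg : ∀ i j, 0 ≤ K i j)
    (hirr : ∀ i j, ∃ k : ℕ, 0 < k ∧ 0 < (K ^ k) i j)
    (hdiag : ∀ i, 0 < K i i)
    (D : Matrix (Fin n) (Fin n) ℝ)
    (hD : D = Matrix.diagonal (K *ᵥ fun _ => (1 : ℝ)))
    (Dhalf : Matrix (Fin n) (Fin n) ℝ)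
    (hDhalf : Dhalf = Matrix.diagonal (fun i => (Real.sqrt ((K *ᵥ fun _ => (1 : ℝ)) i))⁻¹))
    (W : Matrix (Fin n) (Fin n) ℝ) (hW : W = D⁻¹ * K)
    (A : Matrix (Fin m) (Fin n) ℝ)
    (hA1 : A *ᵥ (fun _ => (1 : ℝ)) ≠ 0)
    (γ : ℝ) (hγ0 : 0 < γ) (hγ1 : γ < 1 / lamMax (Dhalf * (Aᵀ * A) * Dhalf)) :
    ∃ (T Ti : Matrix (Fin n) (Fin n) ℝ) (l : Fin n → ℝ), T * Ti = 1 ∧ Ti * T = 1 ∧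
      (∀ i, 0 ≤ l i) ∧ (∀ i, l i < 1) ∧
      W * (1 - γ • (D⁻¹ * (Aᵀ * A))) = T * diagonal l * Ti := by
  set d := K *ᵥ fun _ => (1 : ℝ) with hd
  have hs : ∀ i j, K i j = K j i := fun i j => by simpa using hK.1.apply j i
  have hd0 : ∀ i, 0 < d i := by
    intro i
    simp only [hd, mulVec, dotProduct, mul_one]
    exact lt_of_lt_of_le (hdiag i)
      (Finset.single_le_sum (f := fun j => K i j) (fun j _ => hnonneg i j) (Finset.mem_univ i))
  have hDinv : D⁻¹ = diagonal (fun i => (d i)⁻¹) := by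
    apply inv_eq_right_inv
    rw [hD, diagonal_mul_diagonal, ← diagonal_one]
    congr 1; ext i; exact mul_inv_cancel₀ (hd0 i).ne'
  have hDD : D⁻¹ * D = 1 := by
    rw [hDinv, hD, diagonal_mul_diagonal, ← diagonal_one]
    congr 1; ext i; exact inv_mul_cancel₀ (hd0 i).ne'
  have hlam : 0 < lamMax (Dhalf * (Aᵀ * A) * Dhalf) := by
    have := hγ0.trans hγ1
    exact one_div_pos.1 this
  have hγl : γ * lamMax (Dhalf * (Aᵀ * A) * Dhalf) < 1 := (lt_div_iff₀ hlam).1 hγ1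
  have hDhs : Dhalfᵀ = Dhalf := by rw [hDhalf, diagonal_transpose]
  have hSH : (Dhalf * (Aᵀ * A) * Dhalf).IsHermitian := by
    rw [IsHermitian, conjTranspose_eq_transpose_of_trivial]
    simp only [transpose_mul, transpose_transpose, hDhs, mul_assoc]
  have hquad : ∀ u : Fin n → ℝ, u ⬝ᵥ (Aᵀ *ᵥ (A *ᵥ u)) = (A *ᵥ u) ⬝ᵥ (A *ᵥ u) := by
    intro u; rw [dotProduct_mulVec, vecMul_transpose]
  have hH : ∀ u : Fin n → ℝ, u ≠ 0 → γ * ((A *ᵥ u) ⬝ᵥ (A *ᵥ u)) < ∑ i, d i * u i ^ 2 := by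
    intro u hu
    have h1 := lam_bound _ hSH (fun i => Real.sqrt (d i) * u i)
    have h2 : Dhalf *ᵥ (fun i => Real.sqrt (d i) * u i) = u := by
      rw [hDhalf]; ext i
      rw [mulVec_diagonal]
      have : Real.sqrt (d i) ≠ 0 := (Real.sqrt_pos.2 (hd0 i)).ne'
      field_simp
    have h3 : (fun i => Real.sqrt (d i) * u i) ᵥ* Dhalf = u := by
      rw [← mulVec_transpose, hDhs, h2]
    rw [← mulVec_mulVec, h2, ← mulVec_mulVec, dotProduct_mulVec, h3, ← mulVec_mulVec, hquad] at h1
    have h4 : (fun i => Real.sqrt (d i) * u i) ⬝ᵥ (fun i => Real.sqrt (d i) * u i)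
        = ∑ i, d i * u i ^ 2 := by
      refine Finset.sum_congr rfl fun i _ => ?_
      have := Real.mul_self_sqrt (hd0 i).le
      calc _ = (Real.sqrt (d i) * Real.sqrt (d i)) * u i ^ 2 := by ring
        _ = _ := by rw [this]
    rw [h4] at h1
    have h5 : 0 < ∑ i, d i * u i ^ 2 := by
      obtain ⟨i, hi⟩ : ∃ i, u i ≠ 0 := by
        by_contra h; push Not at h; exact hu (funext h)
      exact Finset.sum_pos' (fun j _ => mul_nonneg (hd0 j).le (sq_nonneg _))
        ⟨i, Finset.mem_univ _, mul_pos (hd0 i) (by positivity)⟩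
    calc _ ≤ γ * (lamMax (Dhalf * (Aᵀ * A) * Dhalf) * ∑ i, d i * u i ^ 2) := by gcongr
      _ = (γ * lamMax (Dhalf * (Aᵀ * A) * Dhalf)) * ∑ i, d i * u i ^ 2 := by ring
      _ < 1 * ∑ i, d i * u i ^ 2 := by gcongr
      _ = _ := one_mul _
  have hB : (D⁻¹ * K * D⁻¹).PosSemidef := by
    have := hK.mul_mul_conjTranspose_same D⁻¹
    rwa [show (D⁻¹)ᴴ = D⁻¹ by
      rw [conjTranspose_eq_transpose_of_trivial, hDinv, diagonal_transpose]] at this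
  have hHp : (D - γ • (Aᵀ * A)).PosDef := by
    refine PosDef.of_dotProduct_mulVec_pos ?_ ?_
    · rw [IsHermitian, conjTranspose_eq_transpose_of_trivial]
      simp [hD, transpose_sub, transpose_mul]
    · intro u hu
      have := hH u hu
      have e : u ⬝ᵥ (D *ᵥ u) = ∑ i, d i * u i ^ 2 := by
        refine Finset.sum_congr rfl fun i _ => ?_
        rw [hD, mulVec_diagonal]; ring
      simp only [star_trivial, sub_mulVec, smul_mulVec, dotProduct_sub, dotProduct_smul,
        smul_eq_mul, ← mulVec_mulVec, hquad, e]
      linarith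
  obtain ⟨T, Ti, l, h1, h2, h3, h4⟩ := diag_lemma _ _ hB hHp
  have hP : W * (1 - γ • (D⁻¹ * (Aᵀ * A))) = T * diagonal l * Ti := by
    rw [← h4, hW, mul_assoc (D⁻¹ * K), mul_sub D⁻¹, hDD, mul_smul_comm]
  refine ⟨T, Ti, l, h1, h2, h3, ?_, hP⟩
  intro i
  have hPv : (W * (1 - γ • (D⁻¹ * (Aᵀ * A)))) *ᵥ (T *ᵥ Pi.single i 1)
      = l i • (T *ᵥ Pi.single i 1) := by
    rw [hP, mulVec_mulVec, mul_assoc, h2, mul_one, ← mulVec_mulVec, ← mulVec_smul]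
    congr 1
    ext j
    rw [mulVec_diagonal]
    by_cases hj : j = i
    · subst hj; simp
    · simp [hj]
  have hv0 : T *ᵥ Pi.single i (1:ℝ) ≠ 0 := by
    intro h
    have h6 : Ti *ᵥ (T *ᵥ Pi.single i (1:ℝ)) = 0 := by rw [h, mulVec_zero]
    rw [mulVec_mulVec, h2, one_mulVec] at h6
    have := congrFun h6 i
    simp at this
  refine eig_lt K hs hnonneg hirr d hd hd0 A hA1 γ hγ0 hH _ hv0 (l i) ?_
  intro j
  set v := T *ᵥ Pi.single i (1:ℝ)
  have h7 : (1 - γ • (D⁻¹ * (Aᵀ * A))) *ᵥ v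
      = fun j => v j - γ * ((Aᵀ *ᵥ (A *ᵥ v)) j / d j) := by
    ext j
    simp only [sub_mulVec, smul_mulVec, one_mulVec, ← mulVec_mulVec, hDinv, Pi.sub_apply,
      Pi.smul_apply, mulVec_diagonal, smul_eq_mul]
    ring
  rw [← mulVec_mulVec, h7, hW, ← mulVec_mulVec] at hPv
  have h8 := congrFun hPv j
  rw [hDinv, mulVec_diagonal] at h8
  simp only [Pi.smul_apply, smul_eq_mul] at h8
  rw [← h8, mul_inv_cancel_left₀ (hd0 j).ne']

lemma norm2_le {n : ℕ} (x : Fin n → ℝ) : norm2 x ≤ ∑ i, |x i| := by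
  unfold norm2
  apply Real.sqrt_le_iff.2 ⟨Finset.sum_nonneg fun i _ => abs_nonneg _, ?_⟩
  calc ∑ i, x i ^ 2 = ∑ i, |x i| ^ 2 := by simp
    _ ≤ _ := Finset.sum_sq_le_sq_sum_of_nonneg fun i _ => abs_nonneg _

lemma abs_le_norm2 {n : ℕ} (x : Fin n → ℝ) (i : Fin n) : |x i| ≤ norm2 x := by
  unfold norm2
  apply Real.le_sqrt_of_sq_le
  rw [sq_abs]
  exact Finset.single_le_sum (f := fun j => x j ^ 2) (fun j _ => sq_nonneg _) (Finset.mem_univ i)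

/-- Iterates, as a pair `(x k, y (k+1))`. -/
noncomputable def iter {n : ℕ} (F : (Fin n → ℝ) → Fin n → ℝ) (α : ℕ → ℝ) :
    ℕ → (Fin n → ℝ) × (Fin n → ℝ)
  | 0 => (0, 0)
  | k + 1 => (F (iter F α k).2,
      F (iter F α k).2 + α (k+1) • (F (iter F α k).2 - (iter F α k).1))

lemma vec_conv {n : ℕ} (P T Ti : Matrix (Fin n) (Fin n) ℝ) (l : Fin n → ℝ)
    (h1 : T * Ti = 1) (h2 : Ti * T = 1) (hl0 : ∀ i, 0 ≤ l i) (hl1 : ∀ i, l i < 1)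
    (hP : P = T * diagonal l * Ti) (α : ℕ → ℝ) (hα : Tendsto α atTop (nhds 1))
    (e : ℕ → Fin n → ℝ)
    (he : ∀ k, 1 ≤ k → e (k + 1) = P *ᵥ (e k + α k • (e k - e (k - 1)))) :
    ∃ C, 0 < C ∧ ∃ β, (0:ℝ) ≤ β ∧ β < 1 ∧ ∃ K', 1 ≤ K' ∧ ∀ k, K' ≤ k →
      norm2 (e k) ≤ C * β ^ k := by
  obtain ⟨β, hβ0, hβ1, hβ⟩ : ∃ β : ℝ, 0 < β ∧ β < 1 ∧ ∀ i, l i < β ^ 2 := by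
    have hc : Tendsto (fun t : ℝ => t ^ 2) (nhdsWithin 1 (Set.Iio 1)) (nhds 1) := by
      have : Tendsto (fun t : ℝ => t ^ 2) (nhds 1) (nhds (1 ^ 2)) := (continuous_pow 2).tendsto 1
      rw [one_pow] at this
      exact this.mono_left nhdsWithin_le_nhds
    have ev1 : ∀ᶠ t : ℝ in nhdsWithin 1 (Set.Iio 1), ∀ i, l i < t ^ 2 :=
      eventually_all.2 fun i => hc.eventually (lt_mem_nhds (hl1 i))
    have ev2 : ∀ᶠ t : ℝ in nhdsWithin 1 (Set.Iio 1), 0 < t :=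
      nhdsWithin_le_nhds (lt_mem_nhds one_pos)
    have ev3 : ∀ᶠ t : ℝ in nhdsWithin 1 (Set.Iio 1), t < 1 := self_mem_nhdsWithin
    obtain ⟨t, a, b, c⟩ := (ev2.and (ev3.and ev1)).exists
    exact ⟨t, a, b, c⟩
  let c : ℕ → Fin n → ℝ := fun k => Ti *ᵥ e k
  have hec : ∀ k, e k = T *ᵥ c k := fun k => by simp [c, mulVec_mulVec, h1]
  have hc : ∀ k, 1 ≤ k → ∀ i, c (k+1) i = l i * (c k i + α k * (c k i - c (k-1) i)) := by
    intro k hk i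
    have : c (k+1) = diagonal l *ᵥ (c k + α k • (c k - c (k-1))) := by
      simp only [c]
      rw [he k hk, hP, mulVec_mulVec, ← mul_assoc, ← mul_assoc, h2, one_mul, ← mulVec_mulVec,
        mulVec_add, mulVec_smul, mulVec_sub]
    rw [this, mulVec_diagonal]; rfl
  choose C N hCN using fun i => scalar_conv (l i) β (hl0 i) (hl1 i) hβ0 (hβ i) α hα
    (fun k => c k i) (fun k hk => hc k hk i)
  refine ⟨∑ i, ∑ j, |T i j| * |C j| + 1, by positivity, β, hβ0.le, hβ1,
    Finset.univ.sup N + 1, by omega, ?_⟩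
  intro k hk
  have hb : ∀ j, |c k j| ≤ |C j| * β ^ k := by
    intro j
    have : N j ≤ Finset.univ.sup N := Finset.le_sup (Finset.mem_univ j)
    refine (hCN j k (by omega)).trans ?_
    gcongr
    exact le_abs_self _
  calc norm2 (e k) ≤ ∑ i, |e k i| := norm2_le _
    _ ≤ ∑ i, ∑ j, |T i j| * |C j| * β ^ k := by
        refine Finset.sum_le_sum fun i _ => ?_
        rw [hec k]
        simp only [mulVec, dotProduct]
        refine (Finset.abs_sum_le_sum_abs _ _).trans (Finset.sum_le_sum fun j _ => ?_)
        rw [abs_mul, mul_assoc]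
        exact mul_le_mul_of_nonneg_left (hb j) (abs_nonneg _)
    _ = (∑ i, ∑ j, |T i j| * |C j|) * β ^ k := by simp only [Finset.sum_mul]
    _ ≤ _ := by
        gcongr
        linarith

theorem stmt18 (n m : ℕ) (K : Matrix (Fin n) (Fin n) ℝ)
    (hK : K.PosSemidef) (hnonneg : ∀ i j, 0 ≤ K i j)
    (hirr : ∀ i j, ∃ k : ℕ, 0 < k ∧ 0 < (K ^ k) i j)
    (hdiag : ∀ i, 0 < K i i)
    (D : Matrix (Fin n) (Fin n) ℝ)
    (hD : D = Matrix.diagonal (K *ᵥ fun _ => (1 : ℝ)))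
    (Dhalf : Matrix (Fin n) (Fin n) ℝ)
    (hDhalf : Dhalf = Matrix.diagonal (fun i => (Real.sqrt ((K *ᵥ fun _ => (1 : ℝ)) i))⁻¹))
    (W : Matrix (Fin n) (Fin n) ℝ) (hW : W = D⁻¹ * K)
    (A : Matrix (Fin m) (Fin n) ℝ) (hA : A ≠ 0)
    (hA1 : A *ᵥ (fun _ => (1 : ℝ)) ≠ 0)
    (b : Fin m → ℝ)
    (γ : ℝ) (hγ0 : 0 < γ) (hγ1 : γ < 1 / lamMax (Dhalf * (Aᵀ * A) * Dhalf))
    (α : ℕ → ℝ) (hα : Tendsto α atTop (nhds 1)) :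
    (∃! xs : Fin n → ℝ,
      ∀ x y : ℕ → Fin n → ℝ,
        y 1 = x 0 →
        (∀ k, 1 ≤ k → x k = W *ᵥ (y k - γ • (D⁻¹ *ᵥ (Aᵀ *ᵥ (A *ᵥ y k - b))))) →
        (∀ k, 1 ≤ k → y (k + 1) = x k + α k • (x k - x (k - 1))) →
        ∃ C, 0 < C ∧ ∃ β, 0 ≤ β ∧ β < 1 ∧ ∃ K', 1 ≤ K' ∧ ∀ k, K' ≤ k →
          norm2 (x k - xs) ≤ C * β ^ k) ∧
    (∀ μ ∈ spectrum ℂ ((W * (1 - γ • (D⁻¹ * (Aᵀ * A)))).map Complex.ofReal),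
      ∃ r : ℝ, μ = (r : ℂ) ∧ 0 ≤ r ∧ r < 1) := by

  obtain ⟨T, Ti, l, h1, h2, hl0, hl1, hP⟩ := core n m K hK hnonneg hirr hdiag D hD Dhalf hDhalf
    W hW A hA1 γ hγ0 hγ1
  constructor
  · set P := W * (1 - γ • (D⁻¹ * (Aᵀ * A))) with hPdef
    set q : Fin n → ℝ := W *ᵥ (γ • (D⁻¹ *ᵥ (Aᵀ *ᵥ b))) with hq
    have hF : ∀ y : Fin n → ℝ, W *ᵥ (y - γ • (D⁻¹ *ᵥ (Aᵀ *ᵥ (A *ᵥ y - b)))) = P *ᵥ y + q := by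
      intro y
      rw [hPdef, hq, ← mulVec_mulVec, ← mulVec_add]
      congr 1
      simp only [mulVec_sub, sub_mulVec, smul_mulVec, one_mulVec, ← mulVec_mulVec, smul_sub]
      abel
    have hxs : ∃ xs : Fin n → ℝ, P *ᵥ xs + q = xs := by
      refine ⟨T *ᵥ (diagonal (fun i => (1 - l i)⁻¹) *ᵥ (Ti *ᵥ q)), ?_⟩
      rw [hP]
      have hq2 : q = T *ᵥ (Ti *ᵥ q) := by rw [mulVec_mulVec, h1, one_mulVec]
      rw [mulVec_mulVec, mul_assoc, h2, mul_one, ← mulVec_mulVec]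
      nth_rewrite 2 [hq2]
      rw [← mulVec_add]
      congr 1
      ext i
      simp only [Pi.add_apply, mulVec_diagonal]
      have : 1 - l i ≠ 0 := by linarith [hl1 i]
      field_simp
      ring
    obtain ⟨xs, hxs⟩ := hxs
    refine ⟨xs, ?_, ?_⟩
    · intro x y _ hx hy
      refine vec_conv P T Ti l h1 h2 hl0 hl1 hP α hα (fun k => x k - xs) ?_
      intro k hk
      show x (k+1) - xs = _
      rw [hx (k+1) (by omega), hF, hy k hk]
      nth_rewrite 1 [← hxs]
      rw [add_sub_add_right_eq_sub, ← mulVec_sub]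
      congr 1
      rw [sub_sub_sub_cancel_right]
      abel
    · intro xs' h'
      have hex : ∃ x y : ℕ → Fin n → ℝ, y 1 = x 0 ∧
        (∀ k, 1 ≤ k → x k = W *ᵥ (y k - γ • (D⁻¹ *ᵥ (Aᵀ *ᵥ (A *ᵥ y k - b))))) ∧
        (∀ k, 1 ≤ k → y (k + 1) = x k + α k • (x k - x (k - 1))) := by
        let F : (Fin n → ℝ) → Fin n → ℝ :=
          fun y => W *ᵥ (y - γ • (D⁻¹ *ᵥ (Aᵀ *ᵥ (A *ᵥ y - b))))
        refine ⟨fun k => (iter F α k).1, fun k => (iter F α (k-1)).2, rfl, ?_, ?_⟩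
        · intro k hk
          obtain ⟨k, rfl⟩ := Nat.exists_eq_add_of_le' hk
          rfl
        · intro k hk
          obtain ⟨k, rfl⟩ := Nat.exists_eq_add_of_le' hk
          rfl
      obtain ⟨x, y, hy1, hx, hy⟩ := hex
      have lim : ∀ z : Fin n → ℝ, (∃ C, 0 < C ∧ ∃ β, (0:ℝ) ≤ β ∧ β < 1 ∧ ∃ K', 1 ≤ K' ∧
          ∀ k, K' ≤ k → norm2 (x k - z) ≤ C * β ^ k) → Tendsto x atTop (nhds z) := by
        rintro z ⟨C, _, β, hβ0, hβ1, K', _, hb⟩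
        rw [tendsto_pi_nhds]
        intro i
        rw [tendsto_iff_norm_sub_tendsto_zero]
        have hz : Tendsto (fun k => C * β ^ k) atTop (nhds 0) := by
          simpa using (tendsto_pow_atTop_nhds_zero_of_lt_one hβ0 hβ1).const_mul C
        refine squeeze_zero' (Eventually.of_forall fun _ => norm_nonneg _) ?_ hz
        filter_upwards [eventually_ge_atTop K'] with k hk
        exact (abs_le_norm2 (x k - z) i).trans (hb k hk)
      refine tendsto_nhds_unique (lim _ (h' x y hy1 hx hy)) (lim _ ?_)
      refine vec_conv P T Ti l h1 h2 hl0 hl1 hP α hα (fun k => x k - xs) ?_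
      intro k hk
      show x (k+1) - xs = _
      rw [hx (k+1) (by omega), hF, hy k hk]
      nth_rewrite 1 [← hxs]
      rw [add_sub_add_right_eq_sub, ← mulVec_sub]
      congr 1
      rw [sub_sub_sub_cancel_right]
      abel
  · intro μ hμ
    have e1 : T.map Complex.ofReal * Ti.map Complex.ofReal = 1 := by
      have := congrArg (fun M => Matrix.map M Complex.ofRealHom) h1
      simp only [Matrix.map_mul, Matrix.map_one _ (map_zero Complex.ofRealHom) (map_one Complex.ofRealHom)] at this
      exact this
    have e2 : Ti.map Complex.ofReal * T.map Complex.ofReal = 1 := by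
      have := congrArg (fun M => Matrix.map M Complex.ofRealHom) h2
      simp only [Matrix.map_mul, Matrix.map_one _ (map_zero Complex.ofRealHom) (map_one Complex.ofRealHom)] at this
      exact this
    let u : (Matrix (Fin n) (Fin n) ℂ)ˣ := ⟨_, _, e1, e2⟩
    have e3 : (W * (1 - γ • (D⁻¹ * (Aᵀ * A)))).map Complex.ofReal
        = u * diagonal (fun i => (l i : ℂ)) * (u⁻¹ : (Matrix (Fin n) (Fin n) ℂ)ˣ) := by
      rw [hP]
      have : (T * diagonal l * Ti).map Complex.ofRealHom
        = T.map Complex.ofRealHom * (diagonal l).map Complex.ofRealHom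
          * Ti.map Complex.ofRealHom := by
        rw [Matrix.map_mul, Matrix.map_mul]
      rw [diagonal_map (map_zero _)] at this
      exact this
    rw [e3, spectrum.units_conjugate, spectrum_diagonal] at hμ
    obtain ⟨i, rfl⟩ := hμ
    exact ⟨l i, rfl, hl0 i, hl1 i⟩
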